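/- arXiv:2102.02405 — 3 statements merged into one kernel-verified Lean document; each statement's English description precedes it below -/
import Mathlib

section
/- For every integer n ≥ 2, the action of K on the set of complete flags in ℂ^n has exactly n(n+1)/2 (that is, binomial(n+1,2)) orbits: the quotient of the set of complete flags in ℂ^n by the K-action is finite of cardinality n(n+1)/2. -/
open Module Submodule

noncomputable section

/-- `stdVec n m` is the `m`-th standard basis vector of `ℂ^n` (1-indexed); `0` out of range. -/
def stdVec (n m : ℕ) : Fin n → ℂ :=
  if h : 1 ≤ m ∧ m ≤ n then Pi.single (⟨m - 1, by omega⟩ : Fin n) 1 else 0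

/-- `stdSub n k` is the subspace `U_k = span(e_1, …, e_k)` of `ℂ^n`. -/
def stdSub (n k : ℕ) : Submodule ℂ (Fin n → ℂ) :=
  span ℂ (stdVec n '' Set.Icc 1 k)

/-- The action of an invertible linear map of `ℂ^n` on a chain of subspaces. -/
def actFlag (n : ℕ) (g : (Fin n → ℂ) ≃ₗ[ℂ] (Fin n → ℂ))
    (V : ℕ → Submodule ℂ (Fin n → ℂ)) (k : ℕ) : Submodule ℂ (Fin n → ℂ) :=
  Submodule.map g.toLinearMap (V k)

/-- The orbit of the chain `V` under a set `B` of invertible linear maps. -/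
def orbitOf (n : ℕ) (B : Set ((Fin n → ℂ) ≃ₗ[ℂ] (Fin n → ℂ)))
    (V : ℕ → Submodule ℂ (Fin n → ℂ)) : Set (ℕ → Submodule ℂ (Fin n → ℂ)) :=
  {V' | ∃ b ∈ B, actFlag n b V = V'}

/-- A complete flag in `ℂ^n`: `V k` is the `k`-dimensional member for `0 ≤ k ≤ n`;
values above `n` are pinned so that two flags are equal iff they agree in degrees `≤ n`. -/
def IsCompleteFlag (n : ℕ) (V : ℕ → Submodule ℂ (Fin n → ℂ)) : Prop :=
  (∀ k, k ≤ n → finrank ℂ ↥(V k) = k) ∧ (∀ k, V k ≤ V (k + 1)) ∧ (∀ k, n ≤ k → V k = V n)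

/-- The complete flag `(v 1 ⊂ v 2 ⊂ ⋯ ⊂ v n)` spanned by the vectors `v 1, …, v n`. -/
def flagOf (n : ℕ) (v : ℕ → Fin n → ℂ) (k : ℕ) : Submodule ℂ (Fin n → ℂ) :=
  span ℂ (v '' Set.Icc 1 (min k n))

/-- `K = {g ∈ GL(n,ℂ) : g e_n = e_n, g U_{n-1} = U_{n-1}}`, a copy of `GL(n-1,ℂ)`. -/
def Ksub (n : ℕ) : Set ((Fin n → ℂ) ≃ₗ[ℂ] (Fin n → ℂ)) :=
  {g | g (stdVec n n) = stdVec n n ∧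
       Submodule.map g.toLinearMap (stdSub n (n - 1)) = stdSub n (n - 1)}

/-- `V'` lies in the `K`-orbit of `V`. -/
def InKOrbit (n : ℕ) (V V' : ℕ → Submodule ℂ (Fin n → ℂ)) : Prop :=
  ∃ g ∈ Ksub n, actFlag n g V = V'

/-- Vectors of the representative flags: for `i = j` this gives the flag `F_i`
`(e_1 ⊂ ⋯ ⊂ e_{i-1} ⊂ e_n ⊂ e_i ⊂ ⋯ ⊂ e_{n-1})` (`e_n` in position `i`), and for
`i < j` the flag `F_{i,j}`
`(e_1 ⊂ ⋯ ⊂ e_{i-1} ⊂ e_i + e_n ⊂ e_{i+1} ⊂ ⋯ ⊂ e_{j-1} ⊂ e_n ⊂ e_j ⊂ ⋯ ⊂ e_{n-1})`. -/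
def repVec (n i j m : ℕ) : Fin n → ℂ :=
  if m < i then stdVec n m
  else if m = i then (if i < j then stdVec n i else 0) + stdVec n n
  else if m < j then stdVec n m
  else if m = j then stdVec n n
  else stdVec n (m - 1)

/-- `repFlag n i i = F_i` and `repFlag n i j = F_{i,j}` for `i < j`. -/
def repFlag (n i j : ℕ) : ℕ → Submodule ℂ (Fin n → ℂ) := flagOf n (repVec n i j)

/-- The set of `K`-orbits of complete flags in `ℂ^n`. -/
def FlagOrbitSpace (n : ℕ) : Type :=
  Quot fun F F' : {V : ℕ → Submodule ℂ (Fin n → ℂ) // IsCompleteFlag n V} =>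
    InKOrbit n F.1 F'.1

/-- last coordinate functional -/
def lastF (n : ℕ) (hn : 0 < n) : (Fin n → ℂ) →ₗ[ℂ] ℂ := LinearMap.proj ⟨n - 1, by omega⟩

lemma stdVec_last (n : ℕ) (hn : 0 < n) :
    stdVec n n = Pi.single (⟨n - 1, by omega⟩ : Fin n) 1 := by
  unfold stdVec
  rw [dif_pos ⟨hn, le_rfl⟩]

lemma lastF_stdVec (n : ℕ) (hn : 0 < n) : lastF n hn (stdVec n n) = 1 := by
  rw [stdVec_last n hn]; simp [lastF]

lemma stdSub_eq (n : ℕ) (hn : 0 < n) : stdSub n (n - 1) = LinearMap.ker (lastF n hn) := by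
  apply le_antisymm
  · unfold stdSub
    rw [span_le]
    rintro _ ⟨m, ⟨h1, h2⟩, rfl⟩
    simp only [SetLike.mem_coe, LinearMap.mem_ker, lastF, LinearMap.proj_apply]
    unfold stdVec
    rw [dif_pos ⟨h1, by omega⟩]
    apply Pi.single_eq_of_ne
    intro h
    rw [Fin.mk.injEq] at h
    omega
  · intro x hx
    have hx' : x ⟨n - 1, by omega⟩ = 0 := hx
    have : x = ∑ m, x m • (Pi.single m (1 : ℂ) : Fin n → ℂ) := by
      funext l
      simp [Finset.sum_apply, Pi.single_apply]
    rw [this]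
    apply Submodule.sum_mem
    intro m _
    by_cases hm : (m : ℕ) = n - 1
    · have : m = ⟨n - 1, by omega⟩ := Fin.ext hm
      rw [this, hx', zero_smul]
      exact zero_mem _
    · apply Submodule.smul_mem
      apply subset_span
      refine ⟨m + 1, ⟨by omega, by omega⟩, ?_⟩
      unfold stdVec
      rw [dif_pos ⟨by omega, by omega⟩]
      rfl

section inv
variable (n : ℕ) (V : ℕ → Submodule ℂ (Fin n → ℂ))

def invI : ℕ := sInf {k | ¬ V k ≤ stdSub n (n - 1)}
def invJ : ℕ := sInf {k | stdVec n n ∈ V k}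

end inv

lemma flag_top {n : ℕ} {V : ℕ → Submodule ℂ (Fin n → ℂ)} (hV : IsCompleteFlag n V) : V n = ⊤ := by
  apply Submodule.eq_top_of_finrank_eq
  rw [hV.1 n le_rfl]; simp

lemma flag_bot {n : ℕ} {V : ℕ → Submodule ℂ (Fin n → ℂ)} (hV : IsCompleteFlag n V) : V 0 = ⊥ := by
  have := hV.1 0 (Nat.zero_le _)
  exact Submodule.finrank_eq_zero.mp this

lemma flag_mono {n : ℕ} {V : ℕ → Submodule ℂ (Fin n → ℂ)} (hV : IsCompleteFlag n V) : Monotone V :=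
  monotone_nat_of_le_succ hV.2.1

lemma last_notMem (n : ℕ) (hn : 0 < n) : stdVec n n ∉ stdSub n (n - 1) := by
  rw [stdSub_eq n hn, LinearMap.mem_ker, lastF_stdVec]; exact one_ne_zero

lemma inv_props {n : ℕ} (hn : 0 < n) {V : ℕ → Submodule ℂ (Fin n → ℂ)} (hV : IsCompleteFlag n V) :
    1 ≤ invI n V ∧ invI n V ≤ invJ n V ∧ invJ n V ≤ n ∧
    stdVec n n ∈ V (invJ n V) ∧ ¬ V (invI n V) ≤ stdSub n (n - 1) ∧
    (∀ k, k < invJ n V → stdVec n n ∉ V k) ∧ (∀ k, k < invI n V → V k ≤ stdSub n (n - 1)) := by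
  have hJn : n ∈ {k | stdVec n n ∈ V k} := by
    simp [flag_top hV]
  have hJ : stdVec n n ∈ V (invJ n V) := Nat.sInf_mem ⟨n, hJn⟩
  have hJI : invJ n V ∈ {k | ¬ V k ≤ stdSub n (n - 1)} := fun h => last_notMem n hn (h hJ)
  have hI : ¬ V (invI n V) ≤ stdSub n (n - 1) := Nat.sInf_mem ⟨_, hJI⟩
  refine ⟨?_, Nat.sInf_le hJI, Nat.sInf_le hJn, hJ, hI, ?_, ?_⟩
  · rw [Nat.one_le_iff_ne_zero]
    intro h
    rw [h, flag_bot hV] at hI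
    exact hI bot_le
  · intro k hk h
    exact Nat.notMem_of_lt_sInf hk h
  · intro k hk
    by_contra h
    exact Nat.notMem_of_lt_sInf hk h

lemma exists_vec {n : ℕ} (hn : 0 < n) {V : ℕ → Submodule ℂ (Fin n → ℂ)} (hV : IsCompleteFlag n V)
    (m : Fin n) : ∃ x : Fin n → ℂ, x ∈ V (m + 1) ∧ x ∉ V m ∧
      (lastF n hn x = if (m : ℕ) + 1 = invI n V ∨ (m : ℕ) + 1 = invJ n V then 1 else 0) ∧
      ((m : ℕ) + 1 = invJ n V → x = stdVec n n) := by
  obtain ⟨h1, h2, h3, hJ, hI, hJ', hI'⟩ := inv_props hn hV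
  rw [stdSub_eq n hn] at hI hI'
  by_cases c : (m : ℕ) + 1 = invJ n V
  · refine ⟨stdVec n n, c ▸ hJ, hJ' _ (by omega), ?_, fun _ => rfl⟩
    simp [c, lastF_stdVec]
  have hy : ∃ y ∈ V (invI n V), lastF n hn y = 1 := by
    obtain ⟨y, hy, hy'⟩ := SetLike.not_le_iff_exists.mp hI
    rw [LinearMap.mem_ker] at hy'
    exact ⟨(lastF n hn y)⁻¹ • y, Submodule.smul_mem _ _ hy, by simp [hy']⟩
  obtain ⟨y, hy, hy1⟩ := hy
  by_cases d : (m : ℕ) + 1 = invI n V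
  · refine ⟨y, d ▸ hy, ?_, ?_, fun h => absurd h c⟩
    · intro h
      have := hI' m (by omega) h
      rw [LinearMap.mem_ker, hy1] at this
      exact one_ne_zero this
    · simp [d, hy1]
  have hx : ∃ x ∈ V (m + 1), x ∉ V m := by
    apply SetLike.not_le_iff_exists.mp
    intro h
    have := Submodule.finrank_mono h
    rw [hV.1 _ (by omega), hV.1 _ (by omega)] at this
    omega
  obtain ⟨x, hx, hx'⟩ := hx
  rw [if_neg (by tauto)]
  by_cases f : (m : ℕ) + 1 < invI n V
  · exact ⟨x, hx, hx', hI' _ f hx, fun h => absurd h c⟩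
  · have hym : y ∈ V m := flag_mono hV (by omega) hy
    refine ⟨x - lastF n hn x • y, ?_, ?_, ?_, fun h => absurd h c⟩
    · exact Submodule.sub_mem _ hx (Submodule.smul_mem _ _ (hV.2.1 _ hym))
    · intro h
      apply hx'
      have := Submodule.add_mem _ h (Submodule.smul_mem _ (lastF n hn x) hym)
      simpa using this
    · simp [hy1]

lemma span_eq_flag {n : ℕ} {V : ℕ → Submodule ℂ (Fin n → ℂ)} (hV : IsCompleteFlag n V)
    (w : Fin n → Fin n → ℂ) (hw : ∀ m : Fin n, w m ∈ V (m + 1)) (hw' : ∀ m : Fin n, w m ∉ V m) (k : ℕ) (hk : k ≤ n) :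
    span ℂ (w '' {m | (m : ℕ) < k}) = V k := by
  induction k with
  | zero => simp [flag_bot hV]
  | succ k ih =>
    have ih := ih (by omega)
    have hle : span ℂ (w '' {m | (m : ℕ) < k + 1}) ≤ V (k + 1) := by
      rw [span_le]
      rintro _ ⟨m, hm, rfl⟩
      have hm : (m : ℕ) < k + 1 := hm
      exact flag_mono hV (by omega) (hw m)
    apply Submodule.eq_of_le_of_finrank_le hle
    rw [hV.1 _ hk]
    have hlt : V k < span ℂ (w '' {m | (m : ℕ) < k + 1}) := by
      rw [← ih]
      apply lt_of_le_of_ne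
      · apply span_mono
        apply Set.image_mono
        intro m hm
        exact Nat.lt_succ_of_lt hm
      · intro h
        apply hw' ⟨k, by omega⟩
        change _ ∈ V k
        rw [← ih, h]
        exact subset_span ⟨_, Nat.lt_succ_self k, rfl⟩
    have := Submodule.finrank_lt_finrank_of_lt hlt
    rw [hV.1 k (by omega)] at this
    exact this

lemma exists_basis {n : ℕ} (hn : 0 < n) {V : ℕ → Submodule ℂ (Fin n → ℂ)} (hV : IsCompleteFlag n V) :
    ∃ b : Basis (Fin n) ℂ (Fin n → ℂ), 
      (∀ k, k ≤ n → span ℂ (b '' {m | (m : ℕ) < k}) = V k) ∧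
      ∀ m : Fin n, (lastF n hn (b m) = if (m : ℕ) + 1 = invI n V ∨ (m : ℕ) + 1 = invJ n V then 1 else 0) ∧
      ((m : ℕ) + 1 = invJ n V → b m = stdVec n n) := by
  choose w hw1 hw2 hw3 hw4 using exists_vec hn hV
  have hs := span_eq_flag hV w hw1 hw2
  have htop : ⊤ ≤ span ℂ (Set.range w) := by
    have := hs n le_rfl
    rw [flag_top hV] at this
    rw [← this]
    exact span_mono (Set.image_subset_range _ _)
  have hli : LinearIndependent ℂ w :=
    linearIndependent_of_top_le_span_of_card_eq_finrank htop (by simp)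
  refine ⟨Basis.mk hli htop, ?_⟩
  rw [Basis.coe_mk]
  exact ⟨hs, fun m => ⟨hw3 m, hw4 m⟩⟩

lemma orbit_of_inv {n : ℕ} (hn : 0 < n) {V V' : ℕ → Submodule ℂ (Fin n → ℂ)}
    (hV : IsCompleteFlag n V) (hV' : IsCompleteFlag n V') (hI : invI n V = invI n V')
    (hJ : invJ n V = invJ n V') : InKOrbit n V V' := by
  obtain ⟨b, hb1, hb2⟩ := exists_basis hn hV
  obtain ⟨b', hb1', hb2'⟩ := exists_basis hn hV'
  obtain ⟨h1, h2, h3, -⟩ := inv_props hn hV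
  let g := b.equiv b' (Equiv.refl _)
  have hg : ∀ m, g (b m) = b' m := fun m => by simp [g]
  have hφ : ∀ x, lastF n hn (g x) = lastF n hn x := by
    have : (lastF n hn) ∘ₗ g.toLinearMap = lastF n hn := by
      apply b.ext
      intro m
      change lastF n hn (g (b m)) = _
      rw [hg, (hb2 m).1, (hb2' m).1, hI, hJ]
    exact fun x => LinearMap.congr_fun this x
  have hact : ∀ k, k ≤ n → Submodule.map g.toLinearMap (V k) = V' k := by
    intro k hk
    rw [← hb1 k hk, ← hb1' k hk, Submodule.map_span, ← Set.image_comp]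
    congr 1
    apply Set.image_congr
    intro m _
    exact hg m
  refine ⟨g, ⟨?_, ?_⟩, ?_⟩
  · have e1 := (hb2 ⟨invJ n V - 1, by omega⟩).2 (by simp only; omega)
    have e2 := (hb2' ⟨invJ n V - 1, by omega⟩).2 (by simp only; omega)
    rw [← e1, hg, e2, e1]
  · rw [stdSub_eq n hn]
    ext x
    simp only [Submodule.mem_map, LinearMap.mem_ker]
    constructor
    · rintro ⟨y, hy, rfl⟩
      exact (hφ y).trans hy
    · intro hx
      refine ⟨g.symm x, ?_, by simp⟩
      rw [← hφ]; simpa using hx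
  · funext k
    by_cases hk : k ≤ n
    · exact hact k hk
    · change Submodule.map g.toLinearMap (V k) = V' k
      rw [hV.2.2 k (by omega), hV'.2.2 k (by omega)]
      exact hact n le_rfl

lemma inv_of_orbit {n : ℕ} {V V' : ℕ → Submodule ℂ (Fin n → ℂ)} (h : InKOrbit n V V') :
    invI n V = invI n V' ∧ invJ n V = invJ n V' := by
  obtain ⟨g, ⟨hg1, hg2⟩, rfl⟩ := h
  constructor
  · unfold invI
    congr 1
    ext k
    simp only [Set.mem_ofPred_eq, not_iff_not]
    unfold actFlag
    conv_rhs => rw [← hg2]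
    exact (Submodule.map_le_map_iff_of_injective g.injective _ _).symm
  · unfold invJ
    congr 1
    ext k
    simp only [Set.mem_ofPred_eq]
    unfold actFlag
    conv_rhs => rw [← hg1]
    exact (Function.Injective.mem_set_image g.injective (s := (V k : Set (Fin n → ℂ)))).symm

lemma exists_flag {n : ℕ} (hn : 0 < n) (i j : ℕ) (hi : 1 ≤ i) (hij : i ≤ j) (hj : j ≤ n) :
    ∃ V, IsCompleteFlag n V ∧ invI n V = i ∧ invJ n V = j := by
  let L : Fin n := ⟨n - 1, by omega⟩
  let J : Fin n := ⟨j - 1, by omega⟩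
  let e : Fin n → (Fin n → ℂ) := fun m => Pi.single m 1
  let σ := Equiv.swap J L
  let c : Fin n → ℂ := fun m => if (m : ℕ) + 1 = i ∧ i < j then 1 else 0
  let w : Fin n → (Fin n → ℂ) := fun m => e (σ m) + c m • e L
  have hwJ : w J = e L := by
    have : c J = 0 := by
      simp only [c, J]
      rw [if_neg]; omega
    simp [w, this, σ]
  have htop : ⊤ ≤ span ℂ (Set.range w) := by
    rw [← (Pi.basisFun ℂ (Fin n)).span_eq, span_le]
    rintro _ ⟨m, rfl⟩
    have : Pi.basisFun ℂ (Fin n) m = w (σ.symm m) - c (σ.symm m) • w J := by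
      rw [hwJ]; simp [w, e]
    rw [this]
    exact Submodule.sub_mem _ (subset_span ⟨_, rfl⟩)
      (Submodule.smul_mem _ _ (subset_span ⟨_, rfl⟩))
  have hli : LinearIndependent ℂ w :=
    linearIndependent_of_top_le_span_of_card_eq_finrank htop (by simp)
  have hφ : ∀ m : Fin n, lastF n hn (w m) = if (m : ℕ) + 1 = i ∨ (m : ℕ) + 1 = j then 1 else 0 := by
    intro m
    by_cases hm : m = J
    · rw [hm, hwJ, if_pos (by simp only [J]; omega)]
      simp [lastF, e, L]
    · have hm' : (m : ℕ) + 1 ≠ j := by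
        intro h; apply hm; apply Fin.ext; simp only [J]; omega
      have hs : σ m ≠ L := by
        intro h
        apply hm
        exact σ.injective (h.trans (Equiv.swap_apply_left J L).symm)
      have h0 : lastF n hn (e (σ m)) = 0 := by
        simp only [lastF, e, LinearMap.proj_apply]
        exact Pi.single_eq_of_ne (Ne.symm hs) _
      have h1 : lastF n hn (e L) = 1 := by simp [lastF, e, L]
      simp only [w, map_add, map_smul, h0, h1, zero_add, smul_eq_mul, mul_one, c]
      congr 1
      apply propext
      omega
  let V : ℕ → Submodule ℂ (Fin n → ℂ) := fun k => span ℂ (w '' {m | (m : ℕ) < k})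
  have hV : IsCompleteFlag n V := by
    refine ⟨?_, ?_, ?_⟩
    · intro k hk
      have h1 : w '' {m | (m : ℕ) < k} = Set.range (fun a : Fin k => w (Fin.castLE hk a)) := by
        ext x
        constructor
        · rintro ⟨m, hm, rfl⟩
          exact ⟨⟨m, hm⟩, rfl⟩
        · rintro ⟨a, rfl⟩
          exact ⟨_, a.2, rfl⟩
      change finrank ℂ ↥(span ℂ (w '' {m | (m : ℕ) < k})) = k
      rw [h1, finrank_span_eq_card]
      · simp
      · exact hli.comp _ (Fin.castLE_injective hk)
    · intro k
      apply span_mono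
      apply Set.image_mono
      intro m hm
      exact Nat.lt_succ_of_lt hm
    · intro k hk
      simp only [V]
      congr 2
      ext m
      simp only [Set.mem_ofPred_eq]
      omega
  refine ⟨V, hV, ?_, ?_⟩
  · have key : ∀ k, V k ≤ stdSub n (n - 1) ↔ k < i := by
      intro k
      rw [stdSub_eq n hn]
      simp only [V]
      rw [span_le]
      constructor
      · intro h
        by_contra hk
        have := h ⟨⟨i - 1, by omega⟩, show i - 1 < k by omega, rfl⟩
        rw [SetLike.mem_coe, LinearMap.mem_ker, hφ, if_pos (by simp only; omega)] at this
        exact one_ne_zero this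
      · rintro h _ ⟨m, hm, rfl⟩
        have hm : (m : ℕ) < k := hm
        rw [SetLike.mem_coe, LinearMap.mem_ker, hφ, if_neg (by omega)]
    obtain ⟨-, -, -, -, h, -, h'⟩ := inv_props hn hV
    rw [key] at h
    have := mt (h' i)
    rw [key] at this
    have := this (by omega)
    omega
  · have key : ∀ k, stdVec n n ∈ V k ↔ j ≤ k := by
      intro k
      have : stdVec n n = w J := by rw [hwJ, stdVec_last n hn]
      rw [this]
      constructor
      · intro h
        by_contra hk
        refine hli.notMem_span_image (s := {m | (m : ℕ) < k}) (x := J) ?_ h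
        simp only [Set.mem_ofPred_eq, J]
        omega
      · intro h
        exact subset_span ⟨J, show j - 1 < k by omega, rfl⟩
    obtain ⟨-, -, -, h, -, h', -⟩ := inv_props hn hV
    rw [key] at h
    have := mt (h' j)
    rw [not_not, key] at this
    have := this le_rfl
    omega

/-- the target of the invariants -/
def pairSet (n : ℕ) : Finset (Σ _ : ℕ, ℕ) := (Finset.Icc 1 n).sigma fun j => Finset.Icc 1 j

def invMap (n : ℕ) (hn : 0 < n) : FlagOrbitSpace n → pairSet n :=
  Quot.lift (fun F => ⟨⟨invJ n F.1, invI n F.1⟩, by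
      have := inv_props hn F.2
      simp only [pairSet, Finset.mem_sigma, Finset.mem_Icc]
      omega⟩) (by
    intro F F' h
    obtain ⟨h1, h2⟩ := inv_of_orbit h
    simp only [h1, h2])

lemma invMap_bij (n : ℕ) (hn : 0 < n) : Function.Bijective (invMap n hn) := by
  constructor
  · rintro ⟨F⟩ ⟨F'⟩ h
    have h := congrArg Subtype.val h
    have h1 : invJ n F.1 = invJ n F'.1 := congrArg Sigma.fst h
    have h2 : invI n F.1 = invI n F'.1 := congrArg (fun s : Σ _ : ℕ, ℕ => s.2) h
    exact Quot.sound (orbit_of_inv hn F.2 F'.2 h2 h1)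
  · rintro ⟨⟨j, i⟩, h⟩
    have h' := h
    simp only [pairSet, Finset.mem_sigma, Finset.mem_Icc] at h'
    obtain ⟨V, hV, hI, hJ⟩ := exists_flag hn i j h'.2.1 h'.2.2 h'.1.2
    refine ⟨Quot.mk _ ⟨V, hV⟩, ?_⟩
    apply Subtype.ext
    change (⟨invJ n V, invI n V⟩ : Σ _ : ℕ, ℕ) = _
    rw [hI, hJ]

lemma card_pairSet (n : ℕ) : (pairSet n).card = n * (n + 1) / 2 := by
  have : (pairSet n).card = ∑ j ∈ Finset.range (n + 1), j := by
    unfold pairSet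
    rw [Finset.card_sigma, Finset.sum_range_succ', Finset.range_eq_Ico]
    simp only [Nat.card_Icc, Nat.add_sub_cancel, add_zero]
    rw [Finset.sum_Ico_add' (fun x => x) 0 n 1]
    rfl
  rw [this, Finset.sum_range_id, Nat.add_sub_cancel, mul_comm]

/-- The action of `K` on the complete flags in `ℂ^n` has exactly
`n(n+1)/2 = binomial(n+1,2)` orbits. -/
theorem stmt_0 (n : ℕ) (hn : 2 ≤ n) :
    Finite (FlagOrbitSpace n) ∧ Nat.card (FlagOrbitSpace n) = n * (n + 1) / 2 := by
  have hn' : 0 < n := by omega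
  let E := Equiv.ofBijective _ (invMap_bij n hn')
  refine ⟨Finite.of_equiv _ E.symm, ?_⟩
  rw [Nat.card_congr E, Nat.card_eq_fintype_card, Fintype.card_coe, card_pairSet]
end
end

section
/- Every complete flag in ℂ^n lies in the K-orbit of exactly one of the n(n+1)/2 flags F_1, …, F_n and F_{i,j} (1 ≤ i < j ≤ n). In particular, these flags lie in pairwise distinct K-orbits, and every K-orbit on the set of complete flags in ℂ^n contains exactly one of them. -/
open Module Submodule

noncomputable section

/-- The last index. -/
def lastIx (n : ℕ) (hn : 2 ≤ n) : Fin n := ⟨n - 1, by omega⟩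

lemma stdVec_succ (n : ℕ) (a : Fin n) : stdVec n (a + 1) = Pi.single a 1 := by
  have : 1 ≤ (a : ℕ) + 1 ∧ (a : ℕ) + 1 ≤ n := by omega
  simp [stdVec, this]

lemma stdVec_apply (n m : ℕ) (a : Fin n) (hm : 1 ≤ m) (hmn : m ≤ n) :
    stdVec n m a = if m = a + 1 then 1 else 0 := by
  obtain ⟨b, rfl⟩ : ∃ b : Fin n, m = b + 1 := ⟨⟨m - 1, by omega⟩, by simp; omega⟩
  rw [stdVec_succ, Pi.single_apply]
  simp [Fin.ext_iff, eq_comm]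

lemma stdVec_last_s1 (n : ℕ) (hn : 2 ≤ n) : stdVec n n (lastIx n hn) = 1 := by
  rw [stdVec_apply n n _ (by omega) le_rfl, if_pos]
  simp [lastIx]; omega

lemma stdVec_lt_last (n m : ℕ) (hn : 2 ≤ n) (hm : 1 ≤ m) (hmn : m < n) :
    stdVec n m (lastIx n hn) = 0 := by
  rw [stdVec_apply n m _ (by omega) hmn.le, if_neg]
  simp [lastIx]; omega

lemma sum_stdVec (n : ℕ) (x : Fin n → ℂ) : x = ∑ a : Fin n, x a • stdVec n (a + 1) := by
  simp only [stdVec_succ]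
  exact pi_eq_sum_univ' x

lemma mem_U (n : ℕ) (hn : 2 ≤ n) (x : Fin n → ℂ) :
    x ∈ stdSub n (n - 1) ↔ x (lastIx n hn) = 0 := by
  constructor
  · intro hx
    have : stdSub n (n - 1) ≤ LinearMap.ker (LinearMap.proj (R := ℂ) (φ := fun _ => ℂ) (lastIx n hn)) := by
      refine span_le.2 ?_
      rintro _ ⟨m, ⟨h1, h2⟩, rfl⟩
      exact stdVec_lt_last n m hn h1 (by omega)
    exact this hx
  · intro hx
    rw [sum_stdVec n x]
    refine sum_mem fun a _ => ?_
    by_cases ha : a = lastIx n hn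
    · rw [ha, hx, zero_smul]; exact zero_mem _
    · refine smul_mem _ _ (subset_span ⟨a + 1, ⟨by omega, ?_⟩, rfl⟩)
      have : (a : ℕ) ≠ n - 1 := fun h => ha (Fin.ext h)
      omega

lemma span_top (n : ℕ) (S : Submodule ℂ (Fin n → ℂ))
    (h : ∀ m, 1 ≤ m → m ≤ n → stdVec n m ∈ S) : S = ⊤ := by
  rw [eq_top_iff]
  intro x _
  rw [sum_stdVec n x]
  exact sum_mem fun a _ => smul_mem _ _ (h _ (by omega) (by omega))

lemma exists_basis_s1 (n : ℕ) (v : ℕ → Fin n → ℂ) (h : span ℂ (v '' Set.Icc 1 n) = ⊤) :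
    ∃ b : Basis (Fin n) ℂ (Fin n → ℂ), ∀ m, (h1 : 1 ≤ m) → (h2 : m ≤ n) →
      b ⟨m - 1, by omega⟩ = v m := by
  have hr : Set.range (fun a : Fin n => v (a + 1)) = v '' Set.Icc 1 n := by
    ext x
    constructor
    · rintro ⟨a, rfl⟩
      exact ⟨a + 1, ⟨by omega, by omega⟩, rfl⟩
    · rintro ⟨m, ⟨h1, h2⟩, rfl⟩
      exact ⟨⟨m - 1, by omega⟩, by simp [Nat.sub_add_cancel h1]⟩
  refine ⟨basisOfTopLeSpanOfCardEqFinrank (fun a : Fin n => v (a + 1)) ?_ ?_, ?_⟩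
  · rw [hr, h]
  · simp
  · intro m h1 h2
    simp [Nat.sub_add_cancel h1]

section rep
variable (n i j : ℕ)

lemma repVec_lt {m : ℕ} (h : m < i) : repVec n i j m = stdVec n m := by simp [repVec, h]

lemma repVec_j (hij : i ≤ j) : repVec n i j j = stdVec n n := by
  unfold repVec
  split_ifs <;> first | omega | simp

lemma repVec_i (hij : i < j) : repVec n i j i = stdVec n i + stdVec n n := by
  simp [repVec, hij]

lemma repVec_mid {m : ℕ} (h : i < m) (h' : m < j) : repVec n i j m = stdVec n m := by
  unfold repVec
  split_ifs <;> first | omega | simp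

lemma repVec_gt {m : ℕ} (h : i ≤ j) (h' : j < m) : repVec n i j m = stdVec n (m - 1) := by
  unfold repVec
  split_ifs <;> first | omega | simp

lemma repVec_span (h1 : 1 ≤ i) (hij : i ≤ j) (hj : j ≤ n) :
    span ℂ (repVec n i j '' Set.Icc 1 n) = ⊤ := by
  have key : ∀ m, 1 ≤ m → m ≤ n → repVec n i j m ∈ span ℂ (repVec n i j '' Set.Icc 1 n) :=
    fun m h h' => subset_span ⟨m, ⟨h, h'⟩, rfl⟩
  have hn := key j (by omega) hj
  rw [repVec_j n i j hij] at hn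
  apply span_top
  intro m hm hmn
  rcases eq_or_lt_of_le hmn with rfl | hmn
  · exact hn
  rcases lt_or_ge m j with hmj | hmj
  · have := key m hm hmn.le
    rcases lt_trichotomy m i with h | rfl | h
    · rwa [repVec_lt n i j h] at this
    · rw [repVec_i n m j hmj] at this
      simpa using sub_mem this hn
    · rwa [repVec_mid n i j h hmj] at this
  · have := key (m + 1) (by omega) hmn
    rwa [repVec_gt n i j hij (by omega), Nat.add_sub_cancel] at this

lemma rep_le_U (hn : 2 ≤ n) (h1 : 1 ≤ i) (hij : i ≤ j) (hj : j ≤ n) (k : ℕ) :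
    repFlag n i j k ≤ stdSub n (n - 1) ↔ k < i := by
  constructor
  · intro h
    by_contra! hk
    have : repVec n i j i ∈ stdSub n (n - 1) :=
      h (subset_span ⟨i, ⟨h1, by omega⟩, rfl⟩)
    rw [mem_U n hn] at this
    rcases eq_or_lt_of_le hij with rfl | hij
    · rw [repVec_j n i i le_rfl, stdVec_last_s1] at this
      exact one_ne_zero this
    · rw [repVec_i n i j hij, Pi.add_apply, stdVec_last_s1,
        stdVec_lt_last n i hn h1 (by omega)] at this
      simp at this
  · intro hk
    refine span_le.2 ?_
    rintro _ ⟨m, ⟨hm1, hm2⟩, rfl⟩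
    rw [repVec_lt n i j (by omega)]
    exact subset_span ⟨m, ⟨hm1, by omega⟩, rfl⟩

lemma mem_rep (h1 : 1 ≤ i) (hij : i ≤ j) (hj : j ≤ n) (k : ℕ) :
    stdVec n n ∈ repFlag n i j k ↔ j ≤ k := by
  constructor
  · intro h
    by_contra! hk
    obtain ⟨b, hb⟩ := exists_basis_s1 n _ (repVec_span n i j h1 hij hj)
    have hs : repFlag n i j k ≤ span ℂ (b '' {a : Fin n | (a : ℕ) + 1 < j}) := by
      refine span_mono ?_
      rintro _ ⟨m, ⟨hm1, hm2⟩, rfl⟩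
      refine ⟨⟨m - 1, by omega⟩, ?_, hb m hm1 (by omega)⟩
      simp; omega
    have h2 := hs h
    rw [← repVec_j n i j hij, ← hb j (by omega) hj] at h2
    refine b.linearIndependent.notMem_span_image ?_ h2
    simp; omega
  · intro hk
    rw [← repVec_j n i j hij]
    exact subset_span ⟨j, ⟨by omega, by omega⟩, rfl⟩

end rep

lemma orbit_le_U (n : ℕ) (W V : ℕ → Submodule ℂ (Fin n → ℂ)) (h : InKOrbit n W V) (k : ℕ) :
    V k ≤ stdSub n (n - 1) ↔ W k ≤ stdSub n (n - 1) := by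
  obtain ⟨g, ⟨-, hg⟩, rfl⟩ := h
  conv_lhs => rw [← hg]
  exact Submodule.map_le_map_iff_of_injective g.injective _ _

lemma orbit_mem (n : ℕ) (W V : ℕ → Submodule ℂ (Fin n → ℂ)) (h : InKOrbit n W V) (k : ℕ) :
    stdVec n n ∈ V k ↔ stdVec n n ∈ W k := by
  obtain ⟨g, ⟨hg, -⟩, rfl⟩ := h
  conv_lhs => rw [← hg]
  constructor
  · rintro ⟨x, hx, hxe⟩
    have : x = stdVec n n := g.injective hxe
    rwa [← this]
  · exact fun h => ⟨_, h, rfl⟩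

lemma flag_span (n : ℕ) (V : ℕ → Submodule ℂ (Fin n → ℂ)) (hV : IsCompleteFlag n V)
    (v : ℕ → Fin n → ℂ)
    (hv : ∀ m, 1 ≤ m → m ≤ n → v m ∈ V m ∧ v m ∉ V (m - 1)) (k : ℕ) (hk : k ≤ n) :
    span ℂ (v '' Set.Icc 1 k) = V k := by
  have hmono : Monotone V := monotone_nat_of_le_succ hV.2.1
  induction k with
  | zero =>
    have := hV.1 0 (by omega)
    rw [Submodule.finrank_eq_zero] at this
    simp [this]
  | succ k ih =>
    have ih := ih (by omega)
    obtain ⟨h1, h2⟩ := hv (k + 1) (by omega) hk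
    rw [Nat.add_sub_cancel] at h2
    apply Submodule.eq_of_le_of_finrank_le
    · refine span_le.2 ?_
      rintro _ ⟨m, ⟨hm1, hm2⟩, rfl⟩
      exact hmono hm2 (hv m hm1 (by omega)).1
    · have hlt : V k < span ℂ (v '' Set.Icc 1 (k + 1)) := by
        refine lt_of_le_of_ne ?_ ?_
        · rw [← ih]
          exact span_mono (Set.image_mono (Set.Icc_subset_Icc_right (by omega)))
        · intro h
          apply h2
          rw [h]
          exact subset_span ⟨k + 1, ⟨by omega, le_rfl⟩, rfl⟩
      have := Submodule.finrank_lt_finrank_of_lt hlt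
      rw [hV.1 k (by omega)] at this
      rw [hV.1 (k + 1) hk]
      exact this

lemma exists_inv (n : ℕ) (hn : 2 ≤ n) (V : ℕ → Submodule ℂ (Fin n → ℂ))
    (hV : IsCompleteFlag n V) :
    ∃ i j, 1 ≤ i ∧ i ≤ j ∧ j ≤ n ∧ ∃ v : ℕ → Fin n → ℂ,
      ∀ m, 1 ≤ m → m ≤ n → (v m ∈ V m ∧ v m ∉ V (m - 1)) ∧ (m = j → v m = stdVec n n) ∧
        (m = i → v m (lastIx n hn) = 1) ∧ (m ≠ i → m ≠ j → v m (lastIx n hn) = 0) := by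
  classical
  have hmono : Monotone V := monotone_nat_of_le_succ hV.2.1
  have h0 : V 0 = ⊥ := by
    have := hV.1 0 (by omega)
    rwa [Submodule.finrank_eq_zero] at this
  have hT : V n = ⊤ := by
    apply Submodule.eq_top_of_finrank_eq
    rw [hV.1 n le_rfl]; simp
  have hL := stdVec_last_s1 n hn
  have hne : stdVec n n ≠ 0 := by
    intro h; rw [h] at hL; simp at hL
  have exj : ∃ k, stdVec n n ∈ V k := ⟨n, by rw [hT]; trivial⟩
  have hnot : ∀ k, stdVec n n ∈ V k → ¬ V k ≤ stdSub n (n - 1) := by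
    intro k hk h
    have := (mem_U n hn _).1 (h hk)
    rw [hL] at this
    exact one_ne_zero this
  have exi : ∃ k, ¬ V k ≤ stdSub n (n - 1) := exj.imp hnot
  obtain ⟨j, hj, hjmin⟩ : ∃ j, stdVec n n ∈ V j ∧ ∀ k < j, stdVec n n ∉ V k :=
    ⟨Nat.find exj, Nat.find_spec exj, fun k hk => Nat.find_min exj hk⟩
  obtain ⟨i, hi, himin⟩ : ∃ i, ¬ V i ≤ stdSub n (n - 1) ∧ ∀ k < i, V k ≤ stdSub n (n - 1) :=
    ⟨Nat.find exi, Nat.find_spec exi, fun k hk => not_not.1 (Nat.find_min exi hk)⟩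
  have hi1 : 1 ≤ i := by
    rcases Nat.eq_zero_or_pos i with rfl | h
    · rw [h0] at hi; exact absurd bot_le hi
    · exact h
  have hij : i ≤ j := by
    by_contra! h
    exact hnot j hj (himin j h)
  have hjn : j ≤ n := by
    by_contra! h
    exact hjmin n h (by rw [hT]; trivial)
  obtain ⟨w, hw, hwL⟩ : ∃ w ∈ V i, w (lastIx n hn) = 1 := by
    obtain ⟨x, hx, hxU⟩ := SetLike.not_le_iff_exists.1 hi
    rw [mem_U n hn] at hxU
    exact ⟨(x (lastIx n hn))⁻¹ • x, smul_mem _ _ hx, by simp [hxU]⟩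
  refine ⟨i, j, hi1, hij, hjn, ?_⟩
  have key : ∀ m, ∃ x : Fin n → ℂ, 1 ≤ m → m ≤ n → (x ∈ V m ∧ x ∉ V (m - 1)) ∧
      (m = j → x = stdVec n n) ∧
      (m = i → x (lastIx n hn) = 1) ∧ (m ≠ i → m ≠ j → x (lastIx n hn) = 0) := by
    intro m
    by_cases hm : 1 ≤ m ∧ m ≤ n
    swap
    · exact ⟨0, fun h h' => absurd ⟨h, h'⟩ hm⟩
    obtain ⟨hm1, hmn⟩ := hm
    by_cases hmj : m = j
    · subst hmj
      exact ⟨stdVec n n, fun _ _ => ⟨⟨hj, hjmin _ (by omega)⟩, fun _ => rfl, fun _ => hL,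
        fun _ h => absurd rfl h⟩⟩
    by_cases hmi : m = i
    · subst hmi
      refine ⟨w, fun _ _ => ⟨⟨hw, fun h => ?_⟩, fun h => absurd h hmj, fun _ => hwL,
        fun h => absurd rfl h⟩⟩
      have := (mem_U n hn _).1 (himin (m - 1) (by omega) h)
      rw [hwL] at this
      exact one_ne_zero this
    obtain ⟨x, hx, hx'⟩ : ∃ x ∈ V m, x ∉ V (m - 1) := by
      apply SetLike.not_le_iff_exists.1
      intro h
      have := Submodule.finrank_mono h
      rw [hV.1 m hmn, hV.1 (m - 1) (by omega)] at this
      omega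
    rcases lt_or_gt_of_ne hmi with h | h
    · exact ⟨x, fun _ _ => ⟨⟨hx, hx'⟩, fun h => absurd h hmj, fun h => absurd h hmi,
        fun _ _ => (mem_U n hn _).1 (himin m h hx)⟩⟩
    · have hw' : w ∈ V (m - 1) := hmono (by omega) hw
      refine ⟨x - x (lastIx n hn) • w, fun _ _ => ⟨⟨sub_mem hx (smul_mem _ _ (hmono (by omega) hw)),
        fun h => hx' ?_⟩, fun h => absurd h hmj, fun h => absurd h hmi, fun _ _ => by simp [hwL]⟩⟩
      simpa using add_mem h (smul_mem _ (x (lastIx n hn)) hw')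
  choose v hv using key
  exact ⟨v, hv⟩

lemma exists_rep (n : ℕ) (hn : 2 ≤ n) (V : ℕ → Submodule ℂ (Fin n → ℂ))
    (hV : IsCompleteFlag n V) :
    ∃ i j, (1 ≤ i ∧ i ≤ j ∧ j ≤ n) ∧ InKOrbit n (repFlag n i j) V := by
  obtain ⟨i, j, hi1, hij, hjn, v, hv⟩ := exists_inv n hn V hV
  refine ⟨i, j, ⟨hi1, hij, hjn⟩, ?_⟩
  have hspan := flag_span n V hV v (fun m h h' => (hv m h h').1)
  have hT : V n = ⊤ := by
    apply Submodule.eq_top_of_finrank_eq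
    rw [hV.1 n le_rfl]; simp
  obtain ⟨b, hb⟩ := exists_basis_s1 n _ (repVec_span n i j hi1 hij hjn)
  obtain ⟨c, hc⟩ := exists_basis_s1 n v (by rw [hspan n le_rfl, hT])
  let g := b.equiv c (Equiv.refl _)
  have hg : ∀ m, 1 ≤ m → m ≤ n → g (repVec n i j m) = v m := by
    intro m h1 h2
    rw [← hb m h1 h2, ← hc m h1 h2]
    simp [g]
  have hgn : g (stdVec n n) = stdVec n n := by
    have := hg j (by omega) hjn
    rwa [repVec_j n i j hij, (hv j (by omega) hjn).2.1 rfl] at this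
  refine ⟨g, ⟨hgn, ?_⟩, ?_⟩
  · apply Submodule.eq_of_le_of_finrank_eq
    · rw [Submodule.map_le_iff_le_comap]
      refine span_le.2 ?_
      rintro _ ⟨m, ⟨hm1, hm2⟩, rfl⟩
      change g (stdVec n m) ∈ stdSub n (n - 1)
      rw [mem_U n hn]
      rcases lt_or_ge m j with hmj | hmj
      · have h := hg m hm1 (by omega)
        have h' := hv m hm1 (by omega)
        rcases lt_trichotomy m i with hmi | rfl | hmi
        · rw [repVec_lt n i j hmi] at h
          rw [h]; exact h'.2.2.2 (by omega) (by omega)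
        · rw [repVec_i n m j hmj, map_add, hgn] at h
          rw [eq_sub_of_add_eq h, Pi.sub_apply, h'.2.2.1 rfl, stdVec_last_s1, sub_self]
        · rw [repVec_mid n i j hmi hmj] at h
          rw [h]; exact h'.2.2.2 (by omega) (by omega)
      · have h := hg (m + 1) (by omega) (by omega)
        rw [repVec_gt n i j hij (by omega), Nat.add_sub_cancel] at h
        rw [h]; exact (hv (m + 1) (by omega) (by omega)).2.2.2 (by omega) (by omega)
    · exact LinearEquiv.finrank_map_eq g _
  · funext k
    have hVk : V k = V (min k n) := by
      rcases le_total k n with h | h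
      · rw [min_eq_left h]
      · rw [min_eq_right h, hV.2.2 k h]
    rw [hVk, ← hspan _ (min_le_right _ _)]
    simp only [actFlag, repFlag, flagOf]
    rw [Submodule.map_span, Set.image_image]
    congr 1
    refine Set.image_congr ?_
    rintro m ⟨h1, h2⟩
    exact hg m h1 (by omega)

/-- Every complete flag in `ℂ^n` lies in the `K`-orbit of exactly one of the flags
`F_i = repFlag n i i` (`1 ≤ i ≤ n`) and `F_{i,j} = repFlag n i j` (`1 ≤ i < j ≤ n`). -/
theorem stmt_1 (n : ℕ) (hn : 2 ≤ n) (V : ℕ → Submodule ℂ (Fin n → ℂ))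
    (hV : IsCompleteFlag n V) :
    ∃! p : ℕ × ℕ, (1 ≤ p.1 ∧ p.1 ≤ p.2 ∧ p.2 ≤ n) ∧ InKOrbit n (repFlag n p.1 p.2) V := by
  obtain ⟨i, j, hp, ho⟩ := exists_rep n hn V hV
  refine ⟨(i, j), ⟨hp, ho⟩, ?_⟩
  rintro ⟨i', j'⟩ ⟨⟨h1, h2, h3⟩, ho'⟩
  simp only at h1 h2 h3 ho'
  obtain ⟨p1, p2, p3⟩ := hp
  have hU : ∀ k, k < i' ↔ k < i := fun k => by
    rw [← rep_le_U n i' j' hn h1 h2 h3, ← rep_le_U n i j hn p1 p2 p3,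
      ← orbit_le_U n _ V ho', ← orbit_le_U n _ V ho]
  have hM : ∀ k, j' ≤ k ↔ j ≤ k := fun k => by
    rw [← mem_rep n i' j' h1 h2 h3, ← mem_rep n i j p1 p2 p3,
      ← orbit_mem n _ V ho', ← orbit_mem n _ V ho]
  have e1 : i' = i := le_antisymm (by have := hU i; omega) (by have := hU i'; omega)
  have e2 : j' = j := le_antisymm ((hM j).2 le_rfl) ((hM j').1 le_rfl)
  rw [e1, e2]
end
end

section
/- For every integer l ≥ 2, the set X decomposes into exactly l classes under the equivalence relation F ~ F' ⟺ F' = g·F for some g ∈ K: the quotient of X by this relation is finite of cardinality l. -/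
open Module Submodule

noncomputable section

/-- The symmetric bilinear form `β(x,y) = ∑_{k=1}^n x_k y_{n+1-k}` on `ℂ^n`. -/
def betaF (n : ℕ) (x y : Fin n → ℂ) : ℂ := ∑ k : Fin n, x k * y k.rev

/-- `SO(n,ℂ)` for the form `β`. -/
def SOgrp (n : ℕ) : Set ((Fin n → ℂ) ≃ₗ[ℂ] (Fin n → ℂ)) :=
  {g | LinearMap.det g.toLinearMap = 1 ∧ ∀ x y, betaF n (g x) (g y) = betaF n x y}

/-- A maximal isotropic flag `V 1 ⊂ ⋯ ⊂ V l` in `ℂ^n` (values pinned outside `1..l`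
so that two flags are equal iff they agree in degrees `1, …, l`). -/
def IsIsoFlag (n l : ℕ) (V : ℕ → Submodule ℂ (Fin n → ℂ)) : Prop :=
  (∀ i, i ≤ l → finrank ℂ ↥(V i) = i) ∧ (∀ i, V i ≤ V (i + 1)) ∧ (∀ i, l ≤ i → V i = V l) ∧
    (∀ u ∈ V l, ∀ w ∈ V l, betaF n u w = 0)

/-- The isotropic flag `(v 1 ⊂ ⋯ ⊂ v l)` spanned by `v 1, …, v l`. -/
def isoFlagOf (n l : ℕ) (v : ℕ → Fin n → ℂ) (k : ℕ) : Submodule ℂ (Fin n → ℂ) :=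
  span ℂ (v '' Set.Icc 1 (min k l))

/-- `K = {g ∈ SO(2l) : g (e_l - e_{-l}) = e_l - e_{-l}}` (here `e_{-l} = e_{l+1}`),
a copy of `SO(2l-1)`. -/
def Keven (l : ℕ) : Set ((Fin (2 * l) → ℂ) ≃ₗ[ℂ] (Fin (2 * l) → ℂ)) :=
  {g | g ∈ SOgrp (2 * l) ∧
       g (stdVec (2 * l) l - stdVec (2 * l) (l + 1)) =
         stdVec (2 * l) l - stdVec (2 * l) (l + 1)}

/-- `V'` lies in the `K`-orbit of `V`. -/
def InKEvenOrbit (l : ℕ) (V V' : ℕ → Submodule ℂ (Fin (2 * l) → ℂ)) : Prop :=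
  ∃ g ∈ Keven l, actFlag (2 * l) g V = V'

/-- Membership in `X`: maximal isotropic flags of `ℂ^{2l}` with
`dim (V_l ∩ U_l) ≡ l (mod 2)`. -/
def InXEven (l : ℕ) (V : ℕ → Submodule ℂ (Fin (2 * l) → ℂ)) : Prop :=
  IsIsoFlag (2 * l) l V ∧ finrank ℂ ↥(V l ⊓ stdSub (2 * l) l) % 2 = l % 2

/-- The set of `K`-orbits on `X`. -/
def XOrbitSpace (l : ℕ) : Type :=
  Quot fun F F' : {V : ℕ → Submodule ℂ (Fin (2 * l) → ℂ) // InXEven l V} =>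
    InKEvenOrbit l F.1 F'.1


section HypTools

variable {E : Type*} [AddCommGroup E] [Module ℂ E] [FiniteDimensional ℂ E]

lemma hyp_exists_dual (B : LinearMap.BilinForm ℂ E) (hs : ∀ x y, B x y = B y x)
    (hn : B.Nondegenerate) {l : ℕ} (v : Fin l → E) (hv : LinearIndependent ℂ v) :
    ∃ w : Fin l → E, ∀ j k, B (v j) (w k) = if j = k then 1 else 0 := by
  have key : ∀ k : Fin l, ∃ f : Module.Dual ℂ E, ∀ j, f (v j) = if j = k then 1 else 0 := by
    intro k
    obtain ⟨f, hf⟩ := LinearMap.exists_extend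
      ((Basis.span hv).coord k)
    refine ⟨f, fun j => ?_⟩
    have h1 : f (v j) = (f ∘ₗ (span ℂ (Set.range v)).subtype) (Basis.span hv j) := by
      simp [Basis.span_apply]
    rw [h1, hf]
    simp [Finsupp.single_apply]
  choose f hf using key
  refine ⟨fun k => (B.toDual hn).symm (f k), fun j k => ?_⟩
  rw [hs, ← LinearMap.BilinForm.toDual_def hn, LinearEquiv.apply_symm_apply, hf]

lemma hyp_exists_basis (B : LinearMap.BilinForm ℂ E) (hs : ∀ x y, B x y = B y x)
    (hn : B.Nondegenerate) {l : ℕ} (hE : finrank ℂ E = 2 * l)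
    (v : Fin l → E) (hv : LinearIndependent ℂ v)
    (hiso : ∀ j k, B (v j) (v k) = 0) (i : Fin l) (w0 : E) (hw0 : B w0 w0 = 0)
    (hvw : ∀ j, B (v j) w0 = if j = i then 1 else 0) :
    ∃ b : Basis (Fin l ⊕ Fin l) ℂ E, (∀ j, b (Sum.inl j) = v j) ∧ b (Sum.inr i) = w0 ∧
      (∀ j k, B (b (Sum.inl j)) (b (Sum.inr k)) = if j = k then 1 else 0) ∧
      (∀ j k, B (b (Sum.inr j)) (b (Sum.inr k)) = 0) := by
  obtain ⟨w', hw'⟩ := hyp_exists_dual B hs hn v hv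
  -- replace the i-th dual vector
  set w1 : Fin l → E := fun k => if k = i then w0 else w' k with hw1
  have h1 : ∀ j k, B (v j) (w1 k) = if j = k then 1 else 0 := by
    intro j k
    by_cases hk : k = i
    · simp [hw1, hk, hvw]
    · simp [hw1, hk, hw']
  have h1i : w1 i = w0 := by simp [hw1]
  have h1' : ∀ j k, B (w1 k) (v j) = if j = k then 1 else 0 := fun j k => by rw [hs, h1]
  set c : Fin l → Fin l → ℂ := fun j k => if j = i then 0 else if k = i then 1 else 1 / 2 with hc
  set w : Fin l → E := fun j => w1 j - ∑ k, (c j k * B (w1 j) (w1 k)) • v k with hw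
  have hwi : w i = w0 := by simp [hw, hc, h1i]
  have hvw2 : ∀ j k, B (v j) (w k) = if j = k then 1 else 0 := by
    intro j k
    simp [hw, hiso, h1]
  have hww : ∀ j k, B (w j) (w k) = 0 := by
    intro j k
    have e1 : ∀ y, B (w j) y = B (w1 j) y - ∑ m, (c j m * B (w1 j) (w1 m)) * B (v m) y := by
      intro y
      have e0 : w j = w1 j - ∑ k, (c j k * B (w1 j) (w1 k)) • v k := rfl
      rw [e0, map_sub, LinearMap.sub_apply, map_sum, LinearMap.sum_apply]
      simp only [map_smul, LinearMap.smul_apply, smul_eq_mul]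
    have e2 : B (w1 j) (w k) = B (w1 j) (w1 k) - c k j * B (w1 k) (w1 j) := by
      simp [hw, h1']
    rw [e1, e2]
    simp only [hvw2]
    simp only [mul_ite, mul_one, mul_zero, Finset.sum_ite_eq', Finset.mem_univ, if_true]
    rw [hs (w1 k) (w1 j)]
    by_cases hj : j = i <;> by_cases hk : k = i
    · subst hj; subst hk; simp [h1i, hw0]
    · simp [hc, hj, hk]
    · simp [hc, hj, hk]
    · simp [hc, hj, hk]; ring
  have hwv2 : ∀ j k, B (w k) (v j) = if j = k then 1 else 0 := fun j k => by rw [hs, hvw2]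
  have hli : LinearIndependent ℂ (Sum.elim v w) := by
    rw [Fintype.linearIndependent_iff]
    intro g hg
    simp only [Fintype.sum_sum_type, Sum.elim_inl, Sum.elim_inr] at hg
    intro s
    rcases s with j | j
    · have := congrArg (fun x => B x (w j)) hg
      simpa [hvw2, hww] using this
    · have := congrArg (fun x => B x (v j)) hg
      simpa [hwv2, hiso] using this
  refine ⟨basisOfLinearIndependentOfCardEqFinrank' _ hli (by simp [hE]; ring), ?_, ?_, ?_, ?_⟩
  · intro j; simp
  · simp [hwi]
  · intro j k; simp [hvw2]
  · intro j k; simp [hww]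

lemma hyp_mem_of_orth (B : LinearMap.BilinForm ℂ E)
    (hn : B.Nondegenerate) {l : ℕ} (hE : finrank ℂ E = 2 * l) (U : Submodule ℂ E)
    (hU : finrank ℂ U = l) (hiso : ∀ x ∈ U, ∀ y ∈ U, B x y = 0) (x : E)
    (hx : ∀ y ∈ U, B y x = 0) : x ∈ U := by
  have h1 : U ≤ B.orthogonal U := by
    intro y hy
    rw [LinearMap.BilinForm.mem_orthogonal_iff]
    intro z hz
    exact hiso z hz y hy
  have h2 := LinearMap.BilinForm.finrank_orthogonal hn U
  have h3 : U = B.orthogonal U := Submodule.eq_of_le_of_finrank_eq h1 (by omega)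
  rw [h3, LinearMap.BilinForm.mem_orthogonal_iff]
  exact hx

/-- Isometries preserving a Lagrangian have determinant one. -/
lemma hyp_det_stab (B : LinearMap.BilinForm ℂ E) (hs : ∀ x y, B x y = B y x)
    (hn : B.Nondegenerate) {l : ℕ} (hl : 0 < l) (hE : finrank ℂ E = 2 * l) (U : Submodule ℂ E)
    (hU : finrank ℂ U = l) (hiso : ∀ x ∈ U, ∀ y ∈ U, B x y = 0) (h : E →ₗ[ℂ] E)
    (hB : ∀ x y, B (h x) (h y) = B x y) (hh : ∀ x ∈ U, h x ∈ U) : LinearMap.det h = 1 := by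
  set vb := finBasisOfFinrankEq ℂ U hU
  set v : Fin l → E := fun j => (vb j : E) with hv
  have hvU : ∀ j, v j ∈ U := fun j => (vb j).2
  have hli : LinearIndependent ℂ v := vb.linearIndependent.map' U.subtype (by simp)
  have hvi : ∀ j k, B (v j) (v k) = 0 := fun j k => hiso _ (hvU j) _ (hvU k)
  obtain ⟨w', hw'⟩ := hyp_exists_dual B hs hn v hli
  have hw'' : ∀ j k, B (w' k) (v j) = if j = k then 1 else 0 := fun j k => by rw [hs, hw']
  set i : Fin l := ⟨0, hl⟩
  obtain ⟨b, hb1, -, hb2, hb3⟩ := hyp_exists_basis B hs hn hE v hli hvi i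
    (w' i - (B (w' i) (w' i) / 2) • v i) (by simp [hw', hw'', hvi]; ring) (by
      intro j; simp [hw', hvi])
  have hb0 : ∀ j k, B (b (Sum.inl j)) (b (Sum.inl k)) = 0 := fun j k => by
    rw [hb1, hb1, hvi]
  have hexp : ∀ y x, B y x = ∑ j, b.repr x (Sum.inl j) * B y (b (Sum.inl j)) +
      ∑ j, b.repr x (Sum.inr j) * B y (b (Sum.inr j)) := by
    intro y x
    have h0 := congrArg (B y) (b.sum_repr x)
    rw [← h0, Fintype.sum_sum_type, map_add, map_sum, map_sum]
    simp only [map_smul, smul_eq_mul]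
  have hrl : ∀ x j, b.repr x (Sum.inr j) = B (b (Sum.inl j)) x := by
    intro x j
    rw [hexp]
    simp [hb0, hb2]
  have hrr : ∀ x j, b.repr x (Sum.inl j) = B (b (Sum.inr j)) x := by
    intro x j
    rw [hexp]
    have : ∀ k, B (b (Sum.inr j)) (b (Sum.inl k)) = if k = j then 1 else 0 := fun k => by
      rw [hs, hb2]
    simp [this, hb3]
  rw [← LinearMap.det_toMatrix b]
  set M := LinearMap.toMatrix b b h with hM
  have h21 : M.toBlocks₂₁ = 0 := by
    ext j k
    simp only [Matrix.toBlocks₂₁, Matrix.of_apply, hM, LinearMap.toMatrix_apply, hrl,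
      Matrix.zero_apply]
    rw [hb1, hb1]
    exact hiso _ (hvU j) _ (hh _ (hvU k))
  have hAD : M.toBlocks₁₁.transpose * M.toBlocks₂₂ = 1 := by
    ext j k
    rw [Matrix.mul_apply, Matrix.one_apply, ← hb2 j k, ← hB]
    rw [hs, hexp]
    have hz : ∀ m, b.repr (h (b (Sum.inl j))) (Sum.inr m) = 0 := by
      intro m
      have := congrFun (congrFun h21 m) j
      simpa [Matrix.toBlocks₂₁, hM, LinearMap.toMatrix_apply] using this
    simp [hz, hs (h (b (Sum.inr k))), Matrix.toBlocks₁₁, Matrix.toBlocks₂₂, hM,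
      LinearMap.toMatrix_apply, hrl]
  rw [← Matrix.fromBlocks_toBlocks M, h21, Matrix.det_fromBlocks_zero₂₁]
  have := congrArg Matrix.det hAD
  simpa using this

/-- Any two Lagrangians are related by a product of reflections with controlled determinant. -/
lemma hyp_exists_isom (B : LinearMap.BilinForm ℂ E) (hs : ∀ x y, B x y = B y x)
    (hn : B.Nondegenerate) {l : ℕ} (hE : finrank ℂ E = 2 * l) (V : Submodule ℂ E)
    (hV : finrank ℂ V = l) (hVi : ∀ x ∈ V, ∀ y ∈ V, B x y = 0) (d : ℕ) :
    ∀ U : Submodule ℂ E, finrank ℂ U = l → (∀ x ∈ U, ∀ y ∈ U, B x y = 0) →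
      finrank ℂ ↥(V ⊓ U) + d = l →
      ∃ s : E ≃ₗ[ℂ] E, (∀ x y, B (s x) (s y) = B x y) ∧ U.map s.toLinearMap = V ∧
        LinearMap.det s.toLinearMap = (-1) ^ d := by
  induction d with
  | zero =>
    intro U hU hUi hd
    refine ⟨LinearEquiv.refl ℂ E, by simp, ?_, by simp⟩
    have h1 : V ⊓ U = V := Submodule.eq_of_le_of_finrank_eq inf_le_left (by omega)
    have h2 : V ⊓ U = U := Submodule.eq_of_le_of_finrank_eq inf_le_right (by omega)
    have : U = V := h2.symm.trans h1
    simp [this]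
  | succ d ih =>
    intro U hU hUi hd
    have hne : ¬ U ≤ V := by
      intro hle
      rw [inf_eq_right.mpr hle] at hd
      omega
    obtain ⟨u, huU, huV⟩ := Set.not_subset.mp hne
    have : ∃ v ∈ V, B v u ≠ 0 := by
      by_contra! hcon
      exact huV (hyp_mem_of_orth B hn hE V hV hVi u hcon)
    obtain ⟨v0, hv0, hv0u⟩ := this
    set v := (B v0 u)⁻¹ • v0 with hvdef
    have hvV : v ∈ V := V.smul_mem _ hv0
    have hvu : B v u = 1 := by simp [hvdef, hv0u]
    have huv : B u v = 1 := by rw [hs, hvu]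
    have huu := hUi u huU u huU
    have hvv := hVi v hvV v hvV
    set f : Module.Dual ℂ E := -(B (u - v)) with hf
    have hfx : f (u - v) = 2 := by simp [hf, huu, hvv, huv, hvu]; norm_num
    set r := Module.reflection hfx with hr
    have hrx : ∀ y, r y = y + B (u - v) y • (u - v) := by
      intro y; rw [hr, Module.reflection_apply]; simp only [hf, LinearMap.neg_apply]; module
    have hrB : ∀ x y, B (r x) (r y) = B x y := by
      intro x y
      rw [hrx, hrx]
      simp only [map_add, map_sub, map_smul, LinearMap.add_apply, LinearMap.sub_apply,
        LinearMap.smul_apply, smul_eq_mul, hs x u, hs x v, huu, hvv, huv, hvu]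
      ring
    have hrdet : LinearMap.det r.toLinearMap = -1 := by
      have : r.toLinearMap = LinearMap.transvection (-f) (u - v) := by
        ext y
        simp [hrx, LinearMap.transvection.apply, hf]
      rw [this, LinearMap.transvection.det]
      simp only [LinearMap.neg_apply, hfx]; norm_num
    have hrr : ∀ x, r (r x) = x := Module.involutive_reflection hfx
    have hru : r u = v := by rw [hrx]; simp [huu, hvu]
    set U' := U.map r.toLinearMap with hU'
    have hU'f : finrank ℂ U' = l := by rw [hU', LinearEquiv.finrank_map_eq, hU]
    have hU'i : ∀ x ∈ U', ∀ y ∈ U', B x y = 0 := by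
      rintro _ ⟨x, hx, rfl⟩ _ ⟨y, hy, rfl⟩
      exact (hrB x y).trans (hUi x hx y hy)
    have hvU' : v ∈ U' := ⟨u, huU, hru⟩
    have hlt : V ⊓ U < V ⊓ U' := by
      refine lt_of_le_of_ne ?_ ?_
      · rintro x ⟨hxV, hxU⟩
        refine ⟨hxV, x, hxU, ?_⟩
        show r x = x
        rw [hrx]; simp [hUi u huU x hxU, hVi v hvV x hxV]
      · intro h
        have : v ∈ V ⊓ U := by rw [h]; exact ⟨hvV, hvU'⟩
        have := hUi u huU v this.2
        rw [huv] at this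
        exact one_ne_zero this
    have hltf := Submodule.finrank_lt_finrank_of_lt hlt
    have hle : V ⊓ U' ≤ (V ⊓ U) ⊔ span ℂ {v} := by
      rintro x ⟨hxV, hxU'⟩
      have h1 : x - B u x • v ∈ V ⊓ U := by
        refine ⟨V.sub_mem hxV (V.smul_mem _ hvV), ?_⟩
        have hy : x - B u x • v ∈ U' := U'.sub_mem hxU' (U'.smul_mem _ hvU')
        obtain ⟨z, hz, hzx⟩ := hy
        have hzx' : r z = x - B u x • v := hzx
        have hz2 : z = x - B u x • v := by
          rw [← hrr z, hzx', hrx]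
          simp [huv, hvv, hVi v hvV x hxV]
        rw [← hz2]; exact hz
      rw [← sub_add_cancel x (B u x • v)]
      exact Submodule.add_mem_sup h1 (Submodule.smul_mem _ _ (mem_span_singleton_self v))
    have hlef : finrank ℂ ↥(V ⊓ U') ≤ finrank ℂ ↥(V ⊓ U) + 1 := by
      refine (Submodule.finrank_mono hle).trans ((Submodule.finrank_add_le_finrank_add_finrank _ _).trans ?_)
      have := finrank_span_le_card (R := ℂ) ({v} : Set E)
      simp at this
      omega
    obtain ⟨s, hs1, hs2, hs3⟩ := ih U' hU'f hU'i (by omega)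
    refine ⟨r.trans s, ?_, ?_, ?_⟩
    · intro x y
      simp [hs1, hrB]
    · rw [← hs2, hU', ← Submodule.map_comp]; rfl
    · have : (r.trans s).toLinearMap = s.toLinearMap ∘ₗ r.toLinearMap := rfl
      rw [this, LinearMap.det_comp, hs3, hrdet, pow_succ]

lemma hyp_det_eq_one (B : LinearMap.BilinForm ℂ E) (hs : ∀ x y, B x y = B y x)
    (hn : B.Nondegenerate) {l : ℕ} (hl : 0 < l) (hE : finrank ℂ E = 2 * l) (U V V' : Submodule ℂ E)
    (hU : finrank ℂ U = l) (hUi : ∀ x ∈ U, ∀ y ∈ U, B x y = 0)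
    (hV : finrank ℂ V = l) (hVi : ∀ x ∈ V, ∀ y ∈ V, B x y = 0)
    (hV' : finrank ℂ V' = l) (hVi' : ∀ x ∈ V', ∀ y ∈ V', B x y = 0)
    (hpar : finrank ℂ ↥(V ⊓ U) % 2 = finrank ℂ ↥(V' ⊓ U) % 2)
    (g : E ≃ₗ[ℂ] E) (hg : ∀ x y, B (g x) (g y) = B x y) (hgV : V.map g.toLinearMap = V') :
    LinearMap.det g.toLinearMap = 1 := by
  have k1 : finrank ℂ ↥(V ⊓ U) ≤ l := hV ▸ Submodule.finrank_mono inf_le_left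
  have k2 : finrank ℂ ↥(V' ⊓ U) ≤ l := hV' ▸ Submodule.finrank_mono inf_le_left
  obtain ⟨s, hs1, hs2, hs3⟩ := hyp_exists_isom B hs hn hE V hV hVi (l - finrank ℂ ↥(V ⊓ U))
    U hU hUi (by omega)
  obtain ⟨t, ht1, ht2, ht3⟩ := hyp_exists_isom B hs hn hE V' hV' hVi' (l - finrank ℂ ↥(V' ⊓ U))
    U hU hUi (by omega)
  have hdet : LinearMap.det ((s.trans g).trans t.symm).toLinearMap = 1 := by
    apply hyp_det_stab B hs hn hl hE U hU hUi
    · intro x y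
      show B (t.symm (g (s x))) (t.symm (g (s y))) = B x y
      rw [← ht1, t.apply_symm_apply, t.apply_symm_apply, hg, hs1]
    · intro x hx
      show t.symm (g (s x)) ∈ U
      have h1 : s x ∈ V := hs2 ▸ Submodule.mem_map_of_mem (f := s.toLinearMap) hx
      have h2 : g (s x) ∈ V' := hgV ▸ Submodule.mem_map_of_mem (f := g.toLinearMap) h1
      rw [← ht2] at h2
      obtain ⟨z, hz, hzx⟩ := h2
      have : t z = g (s x) := hzx
      rw [← this, t.symm_apply_apply]; exact hz
  have hcomp : t.toLinearMap ∘ₗ ((s.trans g).trans t.symm).toLinearMap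
      = g.toLinearMap ∘ₗ s.toLinearMap := by
    ext x; simp
  have h := congrArg LinearMap.det hcomp
  rw [LinearMap.det_comp, LinearMap.det_comp, hdet, hs3, ht3, mul_one] at h
  have hp : ((-1 : ℂ)) ^ (l - finrank ℂ ↥(V' ⊓ U)) = (-1) ^ (l - finrank ℂ ↥(V ⊓ U)) := by
    rw [neg_one_pow_eq_pow_mod_two, neg_one_pow_eq_pow_mod_two (n := l - finrank ℂ ↥(V ⊓ U))]
    congr 1
    omega
  rw [hp] at h
  have hne : ((-1 : ℂ)) ^ (l - finrank ℂ ↥(V ⊓ U)) ≠ 0 := pow_ne_zero _ (by norm_num)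
  exact (mul_right_cancel₀ hne (by rw [one_mul]; exact h)).symm

/-- Hyperbolic basis adapted to an isotropic flag and to the vector `u`. -/
lemma hyp_adapted (B : LinearMap.BilinForm ℂ E) (hs : ∀ x y, B x y = B y x)
    (hn : B.Nondegenerate) {l : ℕ} (hE : finrank ℂ E = 2 * l)
    (V : ℕ → Submodule ℂ E) (hdim : ∀ i, i ≤ l → finrank ℂ (V i) = i)
    (hmono : Monotone V) (hiso : ∀ x ∈ V l, ∀ y ∈ V l, B x y = 0)
    (u : E) (hu : B u u = -2) (i : Fin l) (hi : ∀ x ∈ V i, B u x = 0)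
    (hi' : ∃ x ∈ V (i + 1), B u x ≠ 0) :
    ∃ b : Basis (Fin l ⊕ Fin l) ℂ E,
      (∀ k, k ≤ l → V k = span ℂ ((fun j => b (Sum.inl j)) '' {j : Fin l | (j : ℕ) < k})) ∧
      u = b (Sum.inr i) - b (Sum.inl i) ∧
      (∀ j k, B (b (Sum.inl j)) (b (Sum.inl k)) = 0) ∧
      (∀ j k, B (b (Sum.inl j)) (b (Sum.inr k)) = if j = k then 1 else 0) ∧
      (∀ j k, B (b (Sum.inr j)) (b (Sum.inr k)) = 0) := by
  obtain ⟨x0, hx0, hux0⟩ := hi'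
  set x := (B u x0)⁻¹ • x0 with hx
  have hxV : x ∈ V (i + 1) := (V _).smul_mem _ hx0
  have hux : B u x = 1 := by simp [hx, hux0]
  have hex : ∀ j : Fin l, ∃ v : E, v ∈ V (j + 1) ∧ v ∉ V j ∧ B u v = if j = i then 1 else 0 := by
    intro j
    by_cases hji : j = i
    · subst hji
      refine ⟨x, hxV, fun h => ?_, by simp [hux]⟩
      rw [hi x h] at hux
      exact zero_ne_one hux
    · have hnle : ¬ V (j + 1) ≤ V j := by
        intro h
        have := Submodule.finrank_mono h
        rw [hdim _ (by omega), hdim _ (by omega)] at this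
        omega
      obtain ⟨y, hy, hy'⟩ := Set.not_subset.mp hnle
      rcases lt_or_gt_of_ne (fun h : (j : ℕ) = i => hji (Fin.ext h)) with hlt | hlt
      · refine ⟨y, hy, hy', ?_⟩
        rw [if_neg hji]
        exact hi y (hmono (by omega : (j : ℕ) + 1 ≤ i) hy)
      · have hxj : x ∈ V j := hmono (by omega : (i : ℕ) + 1 ≤ j) hxV
        refine ⟨y - B u y • x, ?_, ?_, ?_⟩
        · exact (V _).sub_mem hy ((V _).smul_mem _ (hmono (by omega) hxj))
        · intro h
          apply hy'
          have := (V j).add_mem h ((V j).smul_mem (B u y) hxj)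
          simpa using this
        · simp [hux, hji]
  choose v hv1 hv2 hv3 using hex
  have hspan : ∀ k, k ≤ l → V k = span ℂ (v '' {j : Fin l | (j : ℕ) < k}) := by
    intro k
    induction k with
    | zero =>
      intro _
      have : V 0 = ⊥ := Submodule.finrank_eq_zero.mp (hdim 0 (Nat.zero_le _))
      simp [this]
    | succ k ih =>
      intro hk
      have hset : {j : Fin l | (j : ℕ) < k + 1} = insert ⟨k, hk⟩ {j : Fin l | (j : ℕ) < k} := by
        ext j
        simp only [Set.mem_ofPred_eq, Set.mem_insert_iff, Fin.ext_iff]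
        omega
      rw [hset, Set.image_insert_eq, span_insert, ← ih (by omega)]
      have hle : span ℂ {v ⟨k, hk⟩} ⊔ V k ≤ V (k + 1) := by
        refine sup_le ?_ (hmono (Nat.le_succ k))
        rw [span_singleton_le_iff_mem]
        exact hv1 ⟨k, hk⟩
      have hlt : V k < span ℂ {v ⟨k, hk⟩} ⊔ V k := by
        refine lt_of_le_of_ne le_sup_right ?_
        intro h
        apply hv2 ⟨k, hk⟩
        show v ⟨k, hk⟩ ∈ V k
        rw [h]
        exact Submodule.mem_sup_left (mem_span_singleton_self _)
      have hf := Submodule.finrank_lt_finrank_of_lt hlt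
      rw [hdim k (by omega)] at hf
      symm
      apply Submodule.eq_of_le_of_finrank_le hle
      rw [hdim _ hk]
      omega
  have hvl : ∀ j, v j ∈ V l := fun j => hmono (by omega : (j : ℕ) + 1 ≤ l) (hv1 j)
  have hli : LinearIndependent ℂ v := by
    rw [linearIndependent_iff_card_eq_finrank_span, Set.finrank]
    have : V l = span ℂ (Set.range v) := by
      rw [hspan l le_rfl]
      congr 1
      ext y; simp
    rw [← this, hdim l le_rfl]
    simp
  have hvv : ∀ j k, B (v j) (v k) = 0 := fun j k => hiso _ (hvl j) _ (hvl k)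
  have hvu : ∀ j, B (v j) u = if j = i then 1 else 0 := fun j => by rw [hs, hv3]
  obtain ⟨b, hb1, hb2, hb3, hb4⟩ := hyp_exists_basis B hs hn hE v hli hvv i (u + v i)
    (by simp [hu, hvv, hvu, hv3]; norm_num) (by intro j; simp [hvu, hvv])
  refine ⟨b, ?_, ?_, ?_, hb3, hb4⟩
  · intro k hk
    simp only [hb1]
    exact hspan k hk
  · rw [hb1, hb2]; simp
  · intro j k; rw [hb1, hb1, hvv]

/-- Two flags with the same invariant are related by an isometry fixing `u`. -/
lemma hyp_witt (B : LinearMap.BilinForm ℂ E) (hs : ∀ x y, B x y = B y x)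
    (hn : B.Nondegenerate) {l : ℕ} (hE : finrank ℂ E = 2 * l)
    (V V' : ℕ → Submodule ℂ E) (hdim : ∀ i, i ≤ l → finrank ℂ (V i) = i)
    (hmono : Monotone V) (hiso : ∀ x ∈ V l, ∀ y ∈ V l, B x y = 0)
    (hdim' : ∀ i, i ≤ l → finrank ℂ (V' i) = i)
    (hmono' : Monotone V') (hiso' : ∀ x ∈ V' l, ∀ y ∈ V' l, B x y = 0)
    (u : E) (hu : B u u = -2) (i : Fin l) (hi : ∀ x ∈ V i, B u x = 0)
    (hi1 : ∃ x ∈ V (i + 1), B u x ≠ 0) (hi' : ∀ x ∈ V' i, B u x = 0)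
    (hi1' : ∃ x ∈ V' (i + 1), B u x ≠ 0) :
    ∃ g : E ≃ₗ[ℂ] E, (∀ x y, B (g x) (g y) = B x y) ∧ g u = u ∧
      ∀ k, k ≤ l → (V k).map g.toLinearMap = V' k := by
  obtain ⟨b, hb1, hb2, hb3, hb4, hb5⟩ :=
    hyp_adapted B hs hn hE V hdim hmono hiso u hu i hi hi1
  obtain ⟨c, hc1, hc2, hc3, hc4, hc5⟩ :=
    hyp_adapted B hs hn hE V' hdim' hmono' hiso' u hu i hi' hi1'
  set g := b.equiv c (Equiv.refl _) with hg
  have hgb : ∀ s, g (b s) = c s := fun s => by simp [hg]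
  refine ⟨g, ?_, ?_, ?_⟩
  · have : B.compl₁₂ g.toLinearMap g.toLinearMap = B := by
      apply LinearMap.BilinForm.ext_basis b
      intro s t
      show B (g (b s)) (g (b t)) = B (b s) (b t)
      rw [hgb, hgb]
      rcases s with s | s <;> rcases t with t | t
      · rw [hc3, hb3]
      · rw [hc4, hb4]
      · rw [hs, hs (b _), hc4, hb4]
      · rw [hc5, hb5]
    intro x y
    exact congrArg (fun f => f x y) this
  · conv_lhs => rw [hb2]
    rw [map_sub, hgb, hgb, ← hc2]
  · intro k hk
    rw [hb1 k hk, hc1 k hk, Submodule.map_span, ← Set.image_comp]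
    congr 1
    apply Set.image_congr
    intro j _
    exact hgb _

end HypTools

/-- The form `betaF` as a bilinear form. -/
def betaB (n : ℕ) : LinearMap.BilinForm ℂ (Fin n → ℂ) :=
  LinearMap.mk₂ ℂ (betaF n)
    (fun x y z => by simp [betaF, add_mul, Finset.sum_add_distrib])
    (fun c x y => by simp [betaF, Finset.mul_sum, mul_assoc])
    (fun x y z => by simp [betaF, mul_add, Finset.sum_add_distrib])
    (fun c x y => by simp [betaF, Finset.mul_sum, mul_left_comm])

lemma betaB_apply (n : ℕ) (x y : Fin n → ℂ) : betaB n x y = betaF n x y := rfl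

lemma betaB_symm (n : ℕ) (x y : Fin n → ℂ) : betaB n x y = betaB n y x := by
  simp only [betaB_apply, betaF]
  rw [← Equiv.sum_comp Fin.revPerm]
  simp [mul_comm]

lemma betaB_single (n : ℕ) (x : Fin n → ℂ) (k : Fin n) :
    betaB n x (Pi.single k 1) = x k.rev := by
  simp only [betaB_apply, betaF]
  rw [Finset.sum_eq_single k.rev]
  · simp
  · intro j _ hj
    have : j.rev ≠ k := fun h => hj (by rw [← h, Fin.rev_rev])
    simp [Pi.single_apply, this]
  · simp

lemma betaB_nondeg (n : ℕ) : (betaB n).Nondegenerate := by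
  have h1 : ∀ x, (∀ y, betaB n x y = 0) → x = 0 := by
    intro x hx
    ext k
    have := hx (Pi.single k.rev 1)
    rw [betaB_single, Fin.rev_rev] at this
    simpa using this
  refine ⟨h1, fun y hy => h1 y fun x => ?_⟩
  rw [betaB_symm]; exact hy x

/-- The vector `e_l - e_{-l}`. -/
def uvec (l : ℕ) : Fin (2 * l) → ℂ := stdVec (2 * l) l - stdVec (2 * l) (l + 1)

lemma stdVec_eq (n m : ℕ) (h1 : 1 ≤ m) (h2 : m ≤ n) :
    stdVec n m = Pi.single (⟨m - 1, by omega⟩ : Fin n) 1 := by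
  rw [stdVec, dif_pos ⟨h1, h2⟩]

lemma betaB_std (n j k : ℕ) (hj : 1 ≤ j) (hj' : j ≤ n) (hk : 1 ≤ k) (hk' : k ≤ n) :
    betaB n (stdVec n j) (stdVec n k) = if j + k = n + 1 then 1 else 0 := by
  rw [stdVec_eq n k hk hk', betaB_single, stdVec_eq n j hj hj', Pi.single_apply]
  congr 1
  simp only [Fin.ext_iff, Fin.val_rev, eq_iff_iff]
  omega

lemma uvec_norm (l : ℕ) (hl : 2 ≤ l) : betaB (2 * l) (uvec l) (uvec l) = -2 := by
  simp only [uvec, map_sub, LinearMap.sub_apply]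
  rw [betaB_std _ _ _ (by omega) (by omega) (by omega) (by omega),
    betaB_std _ _ _ (by omega) (by omega) (by omega) (by omega),
    betaB_std _ _ _ (by omega) (by omega) (by omega) (by omega),
    betaB_std _ _ _ (by omega) (by omega) (by omega) (by omega)]
  rw [if_neg (by omega), if_pos (by omega), if_pos (by omega), if_neg (by omega)]
  norm_num

lemma uvec_std (l j : ℕ) (hl : 2 ≤ l) (hj : 1 ≤ j) (hj' : j ≤ l) :
    betaB (2 * l) (uvec l) (stdVec (2 * l) j) = if j = l then -1 else 0 := by
  simp only [uvec, map_sub, LinearMap.sub_apply]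
  rw [betaB_std _ _ _ (by omega) (by omega) (by omega) (by omega),
    betaB_std _ _ _ (by omega) (by omega) (by omega) (by omega)]
  rw [if_neg (by omega)]
  by_cases h : j = l
  · rw [if_pos (by omega), if_pos h]; norm_num
  · rw [if_neg (by omega), if_neg h]; norm_num

/-- The indices `k` where `V k` is not orthogonal to `u`. -/
def badSet (l : ℕ) (V : ℕ → Submodule ℂ (Fin (2 * l) → ℂ)) : Set ℕ :=
  {k | ∃ x ∈ V k, betaB (2 * l) (uvec l) x ≠ 0}

/-- The invariant. -/
def flagInv (l : ℕ) (V : ℕ → Submodule ℂ (Fin (2 * l) → ℂ)) : ℕ := sInf (badSet l V)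

lemma badSet_l (l : ℕ) (hl : 2 ≤ l) (V : ℕ → Submodule ℂ (Fin (2 * l) → ℂ))
    (hV : IsIsoFlag (2 * l) l V) : l ∈ badSet l V := by
  by_contra hcon
  have h : ∀ y ∈ V l, betaB (2 * l) y (uvec l) = 0 := by
    intro y hy
    by_contra hne
    exact hcon ⟨y, hy, by rwa [betaB_symm]⟩
  have hmem := hyp_mem_of_orth (betaB (2 * l)) (betaB_nondeg _) (l := l) (by simp) (V l)
    (hV.1 l le_rfl) (fun x hx y hy => hV.2.2.2 x hx y hy) (uvec l) h
  have := h _ hmem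
  rw [uvec_norm l hl] at this
  norm_num at this

lemma flagInv_spec (l : ℕ) (hl : 2 ≤ l) (V : ℕ → Submodule ℂ (Fin (2 * l) → ℂ))
    (hV : IsIsoFlag (2 * l) l V) :
    1 ≤ flagInv l V ∧ flagInv l V ≤ l ∧
      (∃ x ∈ V (flagInv l V), betaB (2 * l) (uvec l) x ≠ 0) ∧
      (∀ x ∈ V (flagInv l V - 1), betaB (2 * l) (uvec l) x = 0) := by
  have hl' := badSet_l l hl V hV
  have hmem : flagInv l V ∈ badSet l V := Nat.sInf_mem ⟨l, hl'⟩
  have hpos : 1 ≤ flagInv l V := by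
    by_contra h
    have h0 : flagInv l V = 0 := by omega
    rw [h0] at hmem
    obtain ⟨x, hx, hne⟩ := hmem
    have : V 0 = ⊥ := Submodule.finrank_eq_zero.mp (hV.1 0 (Nat.zero_le _))
    rw [this, Submodule.mem_bot] at hx
    simp [hx] at hne
  refine ⟨hpos, Nat.sInf_le hl', hmem, ?_⟩
  intro x hx
  by_contra hne
  have : flagInv l V ≤ flagInv l V - 1 := Nat.sInf_le ⟨x, hx, hne⟩
  omega

lemma flagInv_act (l : ℕ) (V : ℕ → Submodule ℂ (Fin (2 * l) → ℂ))
    (g : (Fin (2 * l) → ℂ) ≃ₗ[ℂ] (Fin (2 * l) → ℂ)) (hg : g ∈ Keven l) :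
    flagInv l (actFlag (2 * l) g V) = flagInv l V := by
  have hgu : g (uvec l) = uvec l := hg.2
  have key : ∀ x, betaB (2 * l) (uvec l) (g x) = betaB (2 * l) (uvec l) x := by
    intro x
    conv_lhs => rw [← hgu]
    exact hg.1.2 _ _
  unfold flagInv
  congr 1
  ext k
  constructor
  · rintro ⟨_, ⟨x, hx, rfl⟩, hne⟩
    exact ⟨x, hx, fun h => hne ((key x).trans h)⟩
  · rintro ⟨x, hx, hne⟩
    exact ⟨g x, ⟨x, hx, rfl⟩, fun h => hne ((key x).symm.trans h)⟩

lemma std_isotropic (l : ℕ) (x y : Fin (2 * l) → ℂ) (hx : x ∈ stdSub (2 * l) l)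
    (hy : y ∈ stdSub (2 * l) l) : betaB (2 * l) x y = 0 := by
  unfold stdSub at hx hy
  induction hx using Submodule.span_induction with
  | zero => simp
  | add a b _ _ ha hb => simp [ha, hb]
  | smul c a _ ha => simp [ha]
  | mem a ha =>
    obtain ⟨j, ⟨hj, hj'⟩, rfl⟩ := ha
    induction hy using Submodule.span_induction with
    | zero => simp
    | add a b _ _ ha hb => simp [ha, hb]
    | smul c a _ ha => simp [ha]
    | mem b hb =>
      obtain ⟨k, ⟨hk, hk'⟩, rfl⟩ := hb
      rw [betaB_std _ _ _ hj (by omega) hk (by omega), if_neg (by omega)]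

lemma std_finrank (n : ℕ) (S : Finset ℕ) (hS : ∀ j ∈ S, 1 ≤ j ∧ j ≤ n) :
    finrank ℂ ↥(span ℂ (stdVec n '' (S : Set ℕ))) = S.card := by
  have hli : LinearIndependent ℂ (fun j : S => stdVec n j) := by
    have h := (Pi.basisFun ℂ (Fin n)).linearIndependent.comp
      (fun j : S => (⟨(j : ℕ) - 1, by have := hS j j.2; omega⟩ : Fin n)) (by
        intro a b hab
        have ha := hS a a.2
        have hb := hS b b.2
        simp only [Fin.mk.injEq] at hab
        exact Subtype.ext (by omega))
    convert h using 1
    ext1 j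
    simp [stdVec_eq n j (hS j j.2).1 (hS j j.2).2]
  have h2 := finrank_span_eq_card hli
  rw [Set.image_eq_range]
  simpa using h2

/-- A permuted standard flag. -/
def stdFlag (l i : ℕ) : ℕ → Submodule ℂ (Fin (2 * l) → ℂ) :=
  isoFlagOf (2 * l) l (fun j => stdVec (2 * l) (Equiv.swap i l j))

lemma swap_bounds (l i j : ℕ) (hi : 1 ≤ i) (hi' : i ≤ l) (hj : 1 ≤ j) (hj' : j ≤ l) :
    1 ≤ Equiv.swap i l j ∧ Equiv.swap i l j ≤ l := by
  rw [Equiv.swap_apply_def]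
  split_ifs <;> omega

lemma stdFlag_eq (l i k : ℕ) : stdFlag l i k =
    span ℂ (stdVec (2 * l) ''
      (((Finset.Icc 1 (min k l)).map (Equiv.swap i l).toEmbedding : Finset ℕ) : Set ℕ)) := by
  unfold stdFlag isoFlagOf
  congr 1
  rw [Finset.coe_map, ← Set.image_comp, Finset.coe_Icc]
  rfl

lemma stdFlag_l (l i : ℕ) (hi : 1 ≤ i) (hi' : i ≤ l) :
    stdFlag l i l = stdSub (2 * l) l := by
  rw [stdFlag_eq, stdSub]
  congr 2
  ext j
  simp only [Finset.coe_map, min_self, Set.mem_image, Finset.coe_Icc, Set.mem_Icc]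
  constructor
  · rintro ⟨m, hm, rfl⟩
    exact swap_bounds l i m hi hi' hm.1 hm.2
  · intro hj
    exact ⟨Equiv.swap i l j, swap_bounds l i j hi hi' hj.1 hj.2, by simp⟩

lemma stdFlag_finrank (l i k : ℕ) (hi : 1 ≤ i) (hi' : i ≤ l) (hk : k ≤ l) :
    finrank ℂ (stdFlag l i k) = k := by
  rw [stdFlag_eq, std_finrank]
  · simp [hk]
  · intro j hj
    simp only [Finset.mem_map, Finset.mem_Icc] at hj
    obtain ⟨m, hm, rfl⟩ := hj
    have := swap_bounds l i m hi hi' hm.1 (by omega)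
    simp only [Equiv.coe_toEmbedding]
    omega

lemma stdFlag_mem (l i : ℕ) (hi : 1 ≤ i) (hi' : i ≤ l) : InXEven l (stdFlag l i) := by
  refine ⟨⟨fun k hk => stdFlag_finrank l i k hi hi' hk, ?_, ?_, ?_⟩, ?_⟩
  · intro k
    apply span_mono
    apply Set.image_mono
    apply Set.Icc_subset_Icc_right
    omega
  · intro k hk
    unfold stdFlag isoFlagOf
    rw [min_eq_right hk, min_self]
  · intro x hx y hy
    rw [stdFlag_l l i hi hi'] at hx hy
    exact std_isotropic l x y hx hy
  · rw [← stdFlag_l l i hi hi', inf_idem, stdFlag_finrank l i l hi hi' le_rfl]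

lemma stdFlag_inv (l i : ℕ) (hl : 2 ≤ l) (hi : 1 ≤ i) (hi' : i ≤ l) :
    flagInv l (stdFlag l i) = i := by
  apply le_antisymm
  · apply Nat.sInf_le
    refine ⟨stdVec (2 * l) l, subset_span ⟨i, ⟨hi, by omega⟩, by simp⟩, ?_⟩
    rw [uvec_std l l hl (by omega) le_rfl]
    simp
  · apply le_csInf ⟨l, badSet_l l hl _ (stdFlag_mem l i hi hi').1⟩
    rintro k ⟨x, hx, hne⟩
    by_contra hlt
    apply hne
    unfold stdFlag isoFlagOf at hx
    induction hx using Submodule.span_induction with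
    | zero => simp
    | add a b _ _ ha hb =>
      by_contra h
      rw [map_add] at h
      by_cases ha0 : betaB (2 * l) (uvec l) a = 0
      · by_cases hb0 : betaB (2 * l) (uvec l) b = 0
        · exact h (by rw [ha0, hb0, add_zero])
        · exact hb0 (hb hb0)
      · exact ha0 (ha ha0)
    | smul c a _ ha =>
      by_contra h
      rw [map_smul] at h
      by_cases ha0 : betaB (2 * l) (uvec l) a = 0
      · exact h (by rw [ha0, smul_zero])
      · exact ha0 (ha ha0)
    | mem a ha =>
      obtain ⟨j, ⟨hj, hj'⟩, rfl⟩ := ha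
      have hb := swap_bounds l i j hi hi' hj (by omega)
      show betaB (2 * l) (uvec l) (stdVec (2 * l) (Equiv.swap i l j)) = 0
      rw [uvec_std l _ hl hb.1 hb.2, if_neg]
      rw [Equiv.swap_apply_def]
      split_ifs <;> omega

lemma orbit_of_inv_s4 (l : ℕ) (hl : 2 ≤ l) (V V' : ℕ → Submodule ℂ (Fin (2 * l) → ℂ))
    (hV : InXEven l V) (hV' : InXEven l V') (h : flagInv l V = flagInv l V') :
    InKEvenOrbit l V V' := by
  obtain ⟨h1, h2, h3, h4⟩ := flagInv_spec l hl V hV.1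
  obtain ⟨-, -, h3', h4'⟩ := flagInv_spec l hl V' hV'.1
  rw [← h] at h3' h4'
  have hE : finrank ℂ (Fin (2 * l) → ℂ) = 2 * l := by simp
  have e : flagInv l V - 1 + 1 = flagInv l V := by omega
  have hVi : ∀ x ∈ V l, ∀ y ∈ V l, betaB (2 * l) x y = 0 := fun x hx y hy => hV.1.2.2.2 x hx y hy
  have hVi' : ∀ x ∈ V' l, ∀ y ∈ V' l, betaB (2 * l) x y = 0 :=
    fun x hx y hy => hV'.1.2.2.2 x hx y hy
  obtain ⟨g, hg1, hg2, hg3⟩ := hyp_witt (betaB (2 * l)) (betaB_symm _) (betaB_nondeg _) hE V V'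
    hV.1.1 (monotone_nat_of_le_succ hV.1.2.1) hVi
    hV'.1.1 (monotone_nat_of_le_succ hV'.1.2.1) hVi' (uvec l) (uvec_norm l hl)
    ⟨flagInv l V - 1, by omega⟩ h4 (by rw [← e] at h3; exact h3) h4' (by rw [← e] at h3'; exact h3')
  have hUf : finrank ℂ (stdSub (2 * l) l) = l := by
    rw [← stdFlag_l l 1 le_rfl (by omega), stdFlag_finrank l 1 l le_rfl (by omega) le_rfl]
  have hdet := hyp_det_eq_one (betaB (2 * l)) (betaB_symm _) (betaB_nondeg _) (by omega) hE
    (stdSub (2 * l) l) (V l) (V' l) hUf (fun x hx y hy => std_isotropic l x y hx hy)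
    (hV.1.1 l le_rfl) hVi (hV'.1.1 l le_rfl) hVi' (hV.2.trans hV'.2.symm) g hg1 (hg3 l le_rfl)
  refine ⟨g, ⟨⟨hdet, hg1⟩, hg2⟩, ?_⟩
  funext k
  show (V k).map g.toLinearMap = V' k
  rcases le_total k l with hk | hk
  · exact hg3 k hk
  · rw [hV.1.2.2.1 k hk, hV'.1.2.2.1 k hk]
    exact hg3 l le_rfl

/-- The invariant on the orbit space. -/
def orbitInv (l : ℕ) (hl : 2 ≤ l) : XOrbitSpace l → Set.Icc 1 l :=
  Quot.lift (fun F => ⟨flagInv l F.1, (flagInv_spec l hl F.1 F.2.1).1,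
      (flagInv_spec l hl F.1 F.2.1).2.1⟩) (by
    rintro F F' ⟨g, hg, hgF⟩
    apply Subtype.ext
    show flagInv l F.1 = flagInv l F'.1
    rw [← hgF, flagInv_act l F.1 g hg])

lemma orbitInv_bijective (l : ℕ) (hl : 2 ≤ l) : Function.Bijective (orbitInv l hl) := by
  constructor
  · intro a b
    induction a using Quot.ind with | _ F =>
    induction b using Quot.ind with | _ F' =>
    intro h
    apply Quot.sound
    exact orbit_of_inv_s4 l hl F.1 F'.1 F.2 F'.2 (congrArg Subtype.val h)
  · rintro ⟨i, hi, hi'⟩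
    exact ⟨Quot.mk _ ⟨stdFlag l i, stdFlag_mem l i hi hi'⟩, Subtype.ext (stdFlag_inv l i hl hi hi')⟩

/-- `X` decomposes into exactly `l` classes under the `K`-equivalence. -/
theorem stmt_4 (l : ℕ) (hl : 2 ≤ l) :
    Finite (XOrbitSpace l) ∧ Nat.card (XOrbitSpace l) = l := by
  refine ⟨Finite.of_injective _ (orbitInv_bijective l hl).1, ?_⟩
  rw [Nat.card_congr (Equiv.ofBijective _ (orbitInv_bijective l hl))]
  simp
end
end
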